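/- For every channel q : 𝒳 → PMF(𝒴), the induced channel k : 𝒴 → PMF(𝒴) defined for y with positive Y-probability by k(y)(ỹ) = ∑_{x : g(x) = y} P(X = x | g(X) = y) · q(x)(ỹ) (and arbitrarily for y of zero probability) satisfies (i) the expected distortion of the joint of (distribution of Y, k) equals that of the joint of (p_X, q): E[d_T(h(Y), h(Ỹ))] = E[d_T(f(X), h(Ỹ))], and (ii) I(Y;Ỹ) under (distribution of Y, k) is at most I(X;Ỹ) under (p_X, q). Consequently, R_Y(D;T) ≤ R_XY(D;T) for every D > 0. -/

import Mathlib

open scoped BigOperators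

/-- Joint distribution P(a,b) = p(a)·k(a)(b) induced by a source `p` and a channel `k`,
as a real number. -/
noncomputable def jointP {A B : Type*} [Fintype A] [Fintype B] (p : PMF A) (k : A → PMF B)
    (a : A) (b : B) : ℝ :=
  (p a * k a b).toReal

/-- Marginal distribution of the second coordinate of the joint induced by `(p, k)`. -/
noncomputable def margSnd {A B : Type*} [Fintype A] [Fintype B] (p : PMF A) (k : A → PMF B)
    (b : B) : ℝ :=
  ∑ a, jointP p k a b

/-- Mutual information I(A;B) = ∑_{a,b} P(a,b)·log(P(a,b)/(P(a)·P(b))) of the joint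
induced by `(p, k)`; the convention 0·log 0 = 0 holds automatically in Lean. -/
noncomputable def mutualInfo {A B : Type*} [Fintype A] [Fintype B] (p : PMF A)
    (k : A → PMF B) : ℝ :=
  ∑ a, ∑ b, jointP p k a b * Real.log (jointP p k a b / ((p a).toReal * margSnd p k b))

/-- Expected distortion E[d(A,B)] under the joint induced by `(p, k)`. -/
noncomputable def expDist {A B : Type*} [Fintype A] [Fintype B] (p : PMF A) (k : A → PMF B)
    (d : A → B → ℝ) : ℝ :=
  ∑ a, ∑ b, jointP p k a b * d a b

/-- Rate-distortion function: infimum of mutual information over all channels `A → PMF B`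
meeting the expected-distortion constraint `≤ D`. -/
noncomputable def rate {A B : Type*} [Fintype A] [Fintype B] (p : PMF A) (d : A → B → ℝ)
    (D : ℝ) : ℝ :=
  sInf { r : ℝ | ∃ k : A → PMF B, expDist p k d ≤ D ∧ r = mutualInfo p k }

/-- Conditional probability P(A = a | B = b) under the joint induced by `(p, k)`. -/
noncomputable def condProb {A B : Type*} [Fintype A] [Fintype B] (p : PMF A) (k : A → PMF B)
    (a : A) (b : B) : ℝ :=
  jointP p k a b / margSnd p k b

/-- The log-sum inequality. -/
theorem sum_mul_log_sum_div_sum_le {ι : Type*} (s : Finset ι) (u v : ι → ℝ)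
    (hu : ∀ i ∈ s, 0 ≤ u i) (hv : ∀ i ∈ s, 0 ≤ v i) (huv : ∀ i ∈ s, v i = 0 → u i = 0) :
    (∑ i ∈ s, u i) * Real.log ((∑ i ∈ s, u i) / ∑ i ∈ s, v i)
      ≤ ∑ i ∈ s, u i * Real.log (u i / v i) := by
  set U := ∑ i ∈ s, u i with hU
  set V := ∑ i ∈ s, v i with hV
  have hU0 : 0 ≤ U := Finset.sum_nonneg hu
  have hV0 : 0 ≤ V := Finset.sum_nonneg hv
  have hVU : V = 0 → U = 0 := fun h0 => Finset.sum_eq_zero fun i hi =>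
    huv i hi ((Finset.sum_eq_zero_iff_of_nonneg hv).1 h0 i hi)
  have key : ∀ i ∈ s, u i * Real.log (U / V) + (u i - v i * (U / V))
      ≤ u i * Real.log (u i / v i) := by
    intro i hi
    rcases (hu i hi).eq_or_lt with h0 | hpos
    · have := mul_nonneg (hv i hi) (div_nonneg hU0 hV0)
      simp [← h0, this]
    · have hvi : 0 < v i := (hv i hi).lt_of_ne fun h => hpos.ne' (huv i hi h.symm)
      have hUpos : 0 < U := hpos.trans_le (Finset.single_le_sum hu hi)
      have hVpos : 0 < V := hvi.trans_le (Finset.single_le_sum hv hi)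
      have hr : 0 < U / V := div_pos hUpos hVpos
      have hlog := Real.log_le_sub_one_of_pos (div_pos hr (div_pos hpos hvi))
      rw [Real.log_div hr.ne' (div_pos hpos hvi).ne'] at hlog
      have hmul := mul_le_mul_of_nonneg_left hlog hpos.le
      have hcancel : u i * (U / V / (u i / v i) - 1) = v i * (U / V) - u i := by
        field_simp
      rw [hcancel] at hmul
      linarith
  have hsum := Finset.sum_le_sum key
  rw [Finset.sum_add_distrib, Finset.sum_sub_distrib, ← Finset.sum_mul, ← Finset.sum_mul,
    ← hU, ← hV] at hsum
  have hcancel : V * (U / V) = U := by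
    by_cases h0 : V = 0
    · simp [h0, hVU h0]
    · field_simp
  linarith

section Channel

variable {A B C : Type*} [Fintype A] [Fintype B]

theorem jointP_nonneg (p : PMF A) (k : A → PMF B) (a : A) (b : B) : 0 ≤ jointP p k a b :=
  ENNReal.toReal_nonneg

theorem margSnd_nonneg (p : PMF A) (k : A → PMF B) (b : B) : 0 ≤ margSnd p k b :=
  Finset.sum_nonneg fun _ _ => jointP_nonneg p k _ b

theorem jointP_eq_zero_of_prod_marginals_eq_zero (p : PMF A) (k : A → PMF B) (a : A) (b : B)
    (h : (p a).toReal * margSnd p k b = 0) : jointP p k a b = 0 := by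
  rcases mul_eq_zero.1 h with h | h
  · simp [jointP, h]
  · exact (Finset.sum_eq_zero_iff_of_nonneg fun _ _ => jointP_nonneg p k _ b).1 h a
      (Finset.mem_univ a)

theorem PMF.sum_toReal_eq_one (p : PMF A) : ∑ a, (p a).toReal = 1 := by
  rw [← ENNReal.toReal_sum fun a _ => p.apply_ne_top a, ← tsum_fintype (L := .unconditional A),
    p.tsum_coe, ENNReal.toReal_one]

theorem sum_jointP_eq (p : PMF A) (k : A → PMF B) (a : A) :
    ∑ b, jointP p k a b = (p a).toReal := by
  simp only [jointP, ENNReal.toReal_mul]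
  rw [← Finset.mul_sum, PMF.sum_toReal_eq_one, mul_one]

theorem sum_margSnd_eq_one (p : PMF A) (k : A → PMF B) : ∑ b, margSnd p k b = 1 := by
  simp only [margSnd]
  rw [Finset.sum_comm]
  simp only [sum_jointP_eq, PMF.sum_toReal_eq_one]

theorem mutualInfo_nonneg (p : PMF A) (k : A → PMF B) : 0 ≤ mutualInfo p k := by
  have hlogsum := sum_mul_log_sum_div_sum_le (Finset.univ : Finset (A × B))
    (fun i => jointP p k i.1 i.2) (fun i => (p i.1).toReal * margSnd p k i.2)
    (fun i _ => jointP_nonneg p k i.1 i.2)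
    (fun i _ => mul_nonneg ENNReal.toReal_nonneg (margSnd_nonneg p k i.2))
    (fun i _ => jointP_eq_zero_of_prod_marginals_eq_zero p k i.1 i.2)
  simpa [mutualInfo, Fintype.sum_prod_type, sum_jointP_eq, PMF.sum_toReal_eq_one, ← Finset.mul_sum,
    sum_margSnd_eq_one] using hlogsum

variable [DecidableEq C]

theorem PMF.map_apply_eq_sum_fiber (p : PMF A) (g : A → C) (c : C) :
    p.map g c = ∑ a ∈ Finset.univ.filter (fun a => g a = c), p a := by
  rw [PMF.map_apply, tsum_fintype, Finset.sum_filter]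
  exact Finset.sum_congr rfl fun a _ => by simp only [eq_comm (a := c)]

theorem exists_induced_channel (p : PMF A) (g : A → C) (q : A → PMF B) :
    ∃ k : C → PMF B, ∀ c, (p.map g) c ≠ 0 → ∀ b, k c b
      = ∑ a ∈ Finset.univ.filter (fun a => g a = c), (p a / (p.map g) c) * q a b := by
  obtain ⟨a₀, -⟩ := p.support_nonempty
  have hex : ∀ c, ∃ r : PMF B, (p.map g) c ≠ 0 → ∀ b, r b
      = ∑ a ∈ Finset.univ.filter (fun a => g a = c), (p a / (p.map g) c) * q a b := by
    intro c
    by_cases h0 : (p.map g) c = 0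
    · exact ⟨q a₀, fun h => absurd h0 h⟩
    refine ⟨PMF.ofFintype (fun b => ∑ a ∈ Finset.univ.filter (fun a => g a = c),
      (p a / (p.map g) c) * q a b) ?_, fun _ b => rfl⟩
    have hq : ∀ a, ∑ b, q a b = 1 := fun a => by
      rw [← tsum_fintype (L := .unconditional B), (q a).tsum_coe]
    rw [Finset.sum_comm]
    simp only [← Finset.mul_sum, hq, mul_one, div_eq_mul_inv]
    rw [← Finset.sum_mul, ← PMF.map_apply_eq_sum_fiber,
      ENNReal.mul_inv_cancel h0 ((p.map g).apply_ne_top c)]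
  choose k hk using hex
  exact ⟨k, hk⟩

variable [Fintype C]

/-- The channel `k` reproduces the joint law of `(g(A), B)`, where `(A, B)` follows `(p, q)`. -/
def IsFiberChannel (p : PMF A) (g : A → C) (q : A → PMF B) (k : C → PMF B) : Prop :=
  ∀ c b, jointP (p.map g) k c b
    = ∑ a ∈ Finset.univ.filter (fun a => g a = c), jointP p q a b

theorem isFiberChannel_of_apply_eq (p : PMF A) (g : A → C) (q : A → PMF B) (k : C → PMF B)
    (hk : ∀ c, (p.map g) c ≠ 0 → ∀ b, k c b
      = ∑ a ∈ Finset.univ.filter (fun a => g a = c), (p a / (p.map g) c) * q a b) :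
    IsFiberChannel p g q k := by
  intro c b
  simp only [jointP]
  rw [← ENNReal.toReal_sum fun a _ =>
    ENNReal.mul_ne_top (p.apply_ne_top a) ((q a).apply_ne_top b)]
  congr 1
  by_cases h0 : (p.map g) c = 0
  · rw [h0, zero_mul]
    rw [PMF.map_apply_eq_sum_fiber, Finset.sum_eq_zero_iff] at h0
    exact (Finset.sum_eq_zero fun a ha => by rw [h0 a ha, zero_mul]).symm
  · rw [hk c h0 b, Finset.mul_sum]
    refine Finset.sum_congr rfl fun a _ => ?_
    rw [← mul_assoc, ENNReal.mul_div_cancel h0 ((p.map g).apply_ne_top c)]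

theorem isFiberChannel_comp (p : PMF A) (g : A → C) (k : C → PMF B) :
    IsFiberChannel p g (fun a => k (g a)) k := by
  intro c b
  simp only [jointP]
  rw [← ENNReal.toReal_sum fun a _ =>
    ENNReal.mul_ne_top (p.apply_ne_top a) ((k (g a)).apply_ne_top b),
    PMF.map_apply_eq_sum_fiber, Finset.sum_mul]
  congr 1
  exact Finset.sum_congr rfl fun a ha => by rw [(Finset.mem_filter.1 ha).2]

namespace IsFiberChannel

variable {p : PMF A} {g : A → C} {q : A → PMF B} {k : C → PMF B}

theorem margSnd_eq (hk : IsFiberChannel p g q k) (b : B) :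
    margSnd (p.map g) k b = margSnd p q b := by
  simp only [margSnd, hk _ b]
  exact Finset.sum_fiberwise _ g _

theorem expDist_eq (hk : IsFiberChannel p g q k) (d : C → B → ℝ) :
    expDist (p.map g) k d = expDist p q (fun a => d (g a)) := by
  simp only [expDist]
  rw [← Finset.sum_fiberwise Finset.univ g]
  refine Finset.sum_congr rfl fun c _ => ?_
  rw [Finset.sum_comm]
  refine Finset.sum_congr rfl fun b _ => ?_
  rw [hk c b, Finset.sum_mul]
  exact Finset.sum_congr rfl fun a ha => by rw [(Finset.mem_filter.1 ha).2]

theorem mutualInfo_le (hk : IsFiberChannel p g q k) :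
    mutualInfo (p.map g) k ≤ mutualInfo p q := by
  simp only [mutualInfo]
  rw [← Finset.sum_fiberwise Finset.univ g]
  refine Finset.sum_le_sum fun c _ => ?_
  rw [Finset.sum_comm]
  refine Finset.sum_le_sum fun b _ => ?_
  rw [hk c b, hk.margSnd_eq b, PMF.map_apply_eq_sum_fiber,
    ENNReal.toReal_sum fun a _ => p.apply_ne_top a,
    Finset.sum_mul (f := fun a => (p a).toReal)]
  exact sum_mul_log_sum_div_sum_le _ _ _ (fun a _ => jointP_nonneg p q a b)
    (fun a _ => mul_nonneg ENNReal.toReal_nonneg (margSnd_nonneg p q b))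
    (fun a _ => jointP_eq_zero_of_prod_marginals_eq_zero p q a b)

end IsFiberChannel

theorem rate_map_le_rate (p : PMF A) (g : A → C) (d : C → B → ℝ) (D : ℝ) :
    rate (p.map g) d D ≤ rate p (fun a => d (g a)) D := by
  have hbdd : BddBelow {r : ℝ | ∃ k : C → PMF B,
      expDist (p.map g) k d ≤ D ∧ r = mutualInfo (p.map g) k} :=
    ⟨0, by rintro _ ⟨k, -, rfl⟩; exact mutualInfo_nonneg _ k⟩
  by_cases hfeas : ∃ q : A → PMF B, expDist p q (fun a => d (g a)) ≤ D
  · obtain ⟨q₀, hq₀⟩ := hfeas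
    refine le_csInf ⟨_, q₀, hq₀, rfl⟩ ?_
    rintro _ ⟨q, hq, rfl⟩
    obtain ⟨k, hk⟩ := exists_induced_channel p g q
    have hfib := isFiberChannel_of_apply_eq p g q k hk
    exact (csInf_le hbdd ⟨k, (hfib.expDist_eq d).trans_le hq, rfl⟩).trans hfib.mutualInfo_le
  · -- An infeasible constraint on the source is infeasible on the features: both infima are of `∅`.
    have hempty : {r : ℝ | ∃ k : C → PMF B,
        expDist (p.map g) k d ≤ D ∧ r = mutualInfo (p.map g) k} = ∅ := by
      refine Set.eq_empty_of_forall_notMem ?_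
      rintro _ ⟨k, hkD, -⟩
      exact hfeas ⟨fun a => k (g a), ((isFiberChannel_comp p g k).expDist_eq d).symm.trans_le hkD⟩
    rw [rate, hempty, Real.sInf_empty]
    refine Real.sInf_nonneg ?_
    rintro _ ⟨q, -, rfl⟩
    exact mutualInfo_nonneg p q

end Channel

/-- For every channel q : 𝒳 → PMF 𝒴, any channel k : 𝒴 → PMF 𝒴 with
k(y)(ỹ) = ∑_{x : g x = y} P(X = x | g(X) = y) · q(x)(ỹ) on y of positive Y-probability
satisfies (i) equal expected task distortion and (ii) I(Y;Ỹ) ≤ I(X;Ỹ); consequently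
R_Y(D;T) ≤ R_XY(D;T) for every D > 0. Here f = h ∘ g. -/
theorem induced_channel_and_RY_le_RXY
    {𝒳 𝒴 𝒯 : Type*} [Fintype 𝒳] [Fintype 𝒴] [DecidableEq 𝒴] [Fintype 𝒯]
    [Nonempty 𝒳] [Nonempty 𝒴] [Nonempty 𝒯]
    (pX : PMF 𝒳) (g : 𝒳 → 𝒴) (h : 𝒴 → 𝒯)
    (dT : 𝒯 → 𝒯 → ℝ) (hdT : ∀ t t', 0 ≤ dT t t') :
    (∀ q : 𝒳 → PMF 𝒴, ∀ k : 𝒴 → PMF 𝒴,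
      (∀ y : 𝒴, (pX.map g) y ≠ 0 → ∀ ytil : 𝒴,
        k y ytil = ∑ x ∈ Finset.univ.filter (fun x => g x = y),
          (pX x / (pX.map g) y) * q x ytil) →
      expDist (pX.map g) k (fun y ytil => dT (h y) (h ytil))
          = expDist pX q (fun x ytil => dT (h (g x)) (h ytil)) ∧
      mutualInfo (pX.map g) k ≤ mutualInfo pX q) ∧
    (∀ D : ℝ, 0 < D →
      rate (pX.map g) (fun y ytil => dT (h y) (h ytil)) D
        ≤ rate pX (fun x ytil => dT (h (g x)) (h ytil)) D) := by
  refine ⟨fun q k hk => ?_, fun D _ => ?_⟩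
  · have hfib := isFiberChannel_of_apply_eq pX g q k hk
    exact ⟨hfib.expDist_eq fun y ytil => dT (h y) (h ytil), hfib.mutualInfo_le⟩
  · exact rate_map_le_rate pX g (fun y ytil => dT (h y) (h ytil)) D
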